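/- If the normal form S* contains two distinct pairs that share the same worker or share the same firm, then the digraph D(S*) contains a directed cycle. -/

import Mathlib

/-- `(w,f)` blocks the matching `μ`: `f ≻_w μ(w)` and `w ≻_f μ⁻¹(f)`.
`prefW w f f'` means worker `w` strictly prefers firm `f` to firm `f'`;
`prefF f w w'` means firm `f` strictly prefers worker `w` to worker `w'`. -/
def Blocks {W F : Type*} (prefW : W → F → F → Prop) (prefF : F → W → W → Prop)
    (μ : W ≃ F) (w : W) (f : F) : Prop :=
  prefW w f (μ w) ∧ prefF f w (μ.symm f)

/-- A matching is stable if no pair blocks it. -/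
def IsStableMatching {W F : Type*} (prefW : W → F → F → Prop)
    (prefF : F → W → W → Prop) (μ : W ≃ F) : Prop :=
  ∀ w f, ¬ Blocks prefW prefF μ w f

/-- A pair `(w,f)` is unattractive in `S`. -/
def Unattractive {W F : Type*} (prefW : W → F → F → Prop) (prefF : F → W → W → Prop)
    (S : Set (W × F)) (w : W) (f : F) : Prop :=
  (∃ f', (w, f') ∈ S ∧ prefW w f' f ∧
      ∀ w', w' ≠ w → (w', f') ∈ S → prefF f' w w') ∨
  (∃ w', (w', f) ∈ S ∧ prefF f w' w ∧
      ∀ f'', f'' ≠ f → (w', f'') ∈ S → prefW w' f f'')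

/-- `delta S` is `S` with all pairs unattractive in `S` removed. -/
def delta {W F : Type*} (prefW : W → F → F → Prop) (prefF : F → W → W → Prop)
    (S : Set (W × F)) : Set (W × F) :=
  {p ∈ S | ¬ Unattractive prefW prefF S p.1 p.2}

/-- The normal form: the fixed point of `delta` reached by iterating from `W × F`.
Since `delta S ⊆ S` and `W × F` is finite, `Fintype.card (W × F)` iterations suffice. -/
def NormalForm (W F : Type*) [Fintype W] [Fintype F]
    (prefW : W → F → F → Prop) (prefF : F → W → W → Prop) : Set (W × F) :=
  (delta prefW prefF)^[Fintype.card (W × F)] Set.univ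

/-- `μ` is `S`-stable: `S`-admissible and no pair of `S` blocks it within `S`. -/
def SStable {W F : Type*} (prefW : W → F → F → Prop) (prefF : F → W → W → Prop)
    (S : Set (W × F)) (μ : W ≃ F) : Prop :=
  (∀ w, (w, μ w) ∈ S) ∧
  ∀ w f, (w, f) ∈ S → ¬ (prefW w f (μ w) ∧ prefF f w (μ.symm f))

/-- Arcs of the matching digraph `D(S)`: from `(w,f)` to `(w,f')` whenever `f' ≻_w f`,
and from `(w,f)` to `(w',f)` whenever `w' ≻_f w`. -/
def Arc {W F : Type*} (prefW : W → F → F → Prop) (prefF : F → W → W → Prop)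
    (S : Set (W × F)) (p q : W × F) : Prop :=
  p ∈ S ∧ q ∈ S ∧
    ((p.1 = q.1 ∧ prefW p.1 q.2 p.2) ∨ (p.2 = q.2 ∧ prefF p.2 q.1 p.1))

/-- `D(S)` contains a directed cycle: distinct vertices `c 0, …, c (n-1)` with `n ≥ 1`,
`c n = c 0`, and an arc from each vertex to the next. -/
def HasDirectedCycle {W F : Type*} (prefW : W → F → F → Prop)
    (prefF : F → W → W → Prop) (S : Set (W × F)) : Prop :=
  ∃ (n : ℕ) (c : Fin (n + 1) → W × F), 0 < n ∧
    Function.Injective (fun i : Fin n => c i.castSucc) ∧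
    c (Fin.last n) = c 0 ∧
    ∀ i : Fin n, Arc prefW prefF S (c i.castSucc) (c i.succ)

/-- The preference lists possess a cycle: there are `k ≥ 2`, distinct workers
`w_1, …, w_k` and distinct firms `f_1, …, f_k` (indexed by `ZMod k`) with
`f_{j+1} ≻_{w_j} f_j` and `w_j ≻_{f_j} w_{j-1}` for all `j`, indices modulo `k`. -/
def PrefCycle {W F : Type*} (prefW : W → F → F → Prop)
    (prefF : F → W → W → Prop) : Prop :=
  ∃ k : ℕ, 2 ≤ k ∧ ∃ (ws : ZMod k → W) (fs : ZMod k → F),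
    Function.Injective ws ∧ Function.Injective fs ∧
    ∀ j : ZMod k, prefW (ws j) (fs (j + 1)) (fs j) ∧ prefF (fs j) (ws j) (ws (j - 1))

theorem delta_subset {W F : Type*} (prefW : W → F → F → Prop) (prefF : F → W → W → Prop)
    (S : Set (W × F)) : delta prefW prefF S ⊆ S :=
  fun _ h => h.1

/-- As long as the iteration of `delta` has not stabilized, each step removes a pair. -/
theorem delta_iterate_stable_or_ncard_add_le {W F : Type*} [Fintype W] [Fintype F]
    (prefW : W → F → F → Prop) (prefF : F → W → W → Prop) (k : ℕ) :
    delta prefW prefF ((delta prefW prefF)^[k] Set.univ) = (delta prefW prefF)^[k] Set.univ ∨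
      ((delta prefW prefF)^[k] Set.univ).ncard + k ≤ Fintype.card (W × F) := by
  induction k with
  | zero => right; simp [Set.ncard_univ]
  | succ k ih =>
    rw [Function.iterate_succ_apply']
    by_cases hfix : delta prefW prefF ((delta prefW prefF)^[k] Set.univ) =
        (delta prefW prefF)^[k] Set.univ
    · left; rw [hfix, hfix]
    · right
      have hle := ih.resolve_left hfix
      have hlt := Set.ncard_lt_ncard ((delta_subset prefW prefF _).ssubset_of_ne hfix)
        (Set.toFinite _)
      omega

theorem delta_normalForm {W F : Type*} [Fintype W] [Fintype F]
    (prefW : W → F → F → Prop) (prefF : F → W → W → Prop) :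
    delta prefW prefF (NormalForm W F prefW prefF) = NormalForm W F prefW prefF := by
  rcases delta_iterate_stable_or_ncard_add_le prefW prefF (Fintype.card (W × F)) with h | h
  · exact h
  · have hempty : NormalForm W F prefW prefF = ∅ :=
      (Set.ncard_eq_zero (Set.toFinite _)).1 (by unfold NormalForm; omega)
    rw [hempty]
    exact Set.subset_empty_iff.1 (delta_subset prefW prefF ∅)

/-- In a fixed point of `delta`, every vertex of the digraph with an incoming arc has an
outgoing arc. -/
theorem Arc.exists_arc_of_delta_eq {W F : Type*}
    {prefW : W → F → F → Prop} {prefF : F → W → W → Prop}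
    (hW : ∀ w, IsStrictTotalOrder F (prefW w)) (hF : ∀ f, IsStrictTotalOrder W (prefF f))
    {S : Set (W × F)} (hS : delta prefW prefF S = S) {u v : W × F}
    (huv : Arc prefW prefF S u v) : ∃ x, Arc prefW prefF S v x := by
  obtain ⟨w, f⟩ := u
  obtain ⟨w₁, f₁⟩ := v
  obtain ⟨hu, hv, ⟨h, hpref⟩ | ⟨h, hpref⟩⟩ := huv <;> dsimp only at h hpref <;> subst h <;>
    rw [← hS] at hu
  · by_contra hno
    refine hu.2 (Or.inl ⟨f₁, hv, hpref, fun w' hw' hmem => ?_⟩)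
    by_contra hn
    have := hF f₁
    refine hno ⟨(w', f₁), hv, hmem, Or.inr ⟨rfl, ?_⟩⟩
    rcases trichotomous_of (prefF f₁) w w' with h | h | h
    · exact absurd h hn
    · exact absurd h.symm hw'
    · exact h
  · by_contra hno
    refine hu.2 (Or.inr ⟨w₁, hv, hpref, fun f' hf' hmem => ?_⟩)
    by_contra hn
    have := hW w₁
    refine hno ⟨(w₁, f'), hv, hmem, Or.inl ⟨rfl, ?_⟩⟩
    rcases trichotomous_of (prefW w₁) f f' with h | h | h
    · exact absurd h hn
    · exact absurd h.symm hf'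
    · exact h

/-- Two distinct pairs of `S` that share a worker or a firm are joined by an arc. -/
theorem arc_or_arc_of_share {W F : Type*}
    {prefW : W → F → F → Prop} {prefF : F → W → W → Prop}
    (hW : ∀ w, IsStrictTotalOrder F (prefW w)) (hF : ∀ f, IsStrictTotalOrder W (prefF f))
    {S : Set (W × F)} {p q : W × F} (hp : p ∈ S) (hq : q ∈ S) (hne : p ≠ q)
    (hshare : p.1 = q.1 ∨ p.2 = q.2) : Arc prefW prefF S p q ∨ Arc prefW prefF S q p := by
  obtain ⟨w, f⟩ := p
  obtain ⟨w₁, f₁⟩ := q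
  rcases hshare with h | h <;> dsimp only at h <;> subst h
  · have := hW w
    rcases trichotomous_of (prefW w) f f₁ with h | h | h
    · exact Or.inr ⟨hq, hp, Or.inl ⟨rfl, h⟩⟩
    · exact absurd (by rw [h]) hne
    · exact Or.inl ⟨hp, hq, Or.inl ⟨rfl, h⟩⟩
  · have := hF f
    rcases trichotomous_of (prefF f) w w₁ with h | h | h
    · exact Or.inr ⟨hq, hp, Or.inr ⟨rfl, h⟩⟩
    · exact absurd (by rw [h]) hne
    · exact Or.inl ⟨hp, hq, Or.inr ⟨rfl, h⟩⟩

/-- If the digraph has an arc and every vertex with an incoming arc has an outgoing arc, then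
following outgoing arcs leads into a directed cycle. -/
theorem hasDirectedCycle_of_arc {W F : Type*} [Finite W] [Finite F]
    {prefW : W → F → F → Prop} {prefF : F → W → W → Prop} {S : Set (W × F)}
    (hnext : ∀ u v, Arc prefW prefF S u v → ∃ x, Arc prefW prefF S v x)
    {u v : W × F} (huv : Arc prefW prefF S u v) : HasDirectedCycle prefW prefF S := by
  have hstep : ∀ y, ∃ x, (∃ u, Arc prefW prefF S u y) → Arc prefW prefF S y x := fun y => by
    by_cases hy : ∃ u, Arc prefW prefF S u y
    · obtain ⟨u, hu⟩ := hy
      obtain ⟨x, hx⟩ := hnext u y hu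
      exact ⟨x, fun _ => hx⟩
    · exact ⟨y, fun h => absurd h hy⟩
  choose g hg using hstep
  have hin : ∀ k, ∃ u, Arc prefW prefF S u (g^[k] v) := fun k => by
    induction k with
    | zero => exact ⟨u, huv⟩
    | succ k ih => rw [Function.iterate_succ_apply']; exact ⟨_, hg _ ih⟩
  obtain ⟨i, j, hij, heq⟩ : ∃ i j, i < j ∧ g^[i] v = g^[j] v := by
    obtain ⟨i, j, hne, heq⟩ := Finite.exists_ne_map_eq_of_infinite fun k : ℕ => g^[k] v
    rcases hne.lt_or_gt with h | h
    · exact ⟨i, j, h, heq⟩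
    · exact ⟨j, i, h, heq.symm⟩
  set y := g^[i] v with hy
  have hper : Function.IsPeriodicPt g (j - i) y := by
    change g^[j - i] y = y
    rw [hy, ← Function.iterate_add_apply, Nat.sub_add_cancel hij.le]
    exact heq.symm
  refine ⟨Function.minimalPeriod g y, fun k => g^[k] y,
    hper.minimalPeriod_pos (Nat.sub_pos_of_lt hij), fun a b hab => ?_, ?_, fun k => ?_⟩
  · exact Fin.ext (Function.iterate_injOn_Iio_minimalPeriod a.2 b.2 hab)
  · exact Function.iterate_minimalPeriod
  · simp only [Fin.val_castSucc, Fin.val_succ, Function.iterate_succ_apply']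
    have hmem := hin (k + i)
    rw [Function.iterate_add_apply] at hmem
    exact hg _ hmem

/-- If the normal form contains two distinct pairs sharing a worker or a firm,
then `D(S*)` contains a directed cycle. -/
theorem cycle_of_normalForm_share {W F : Type*} [Fintype W] [Fintype F] [Nonempty W]
    (hcard : Fintype.card W = Fintype.card F)
    (prefW : W → F → F → Prop) (prefF : F → W → W → Prop)
    (hW : ∀ w, IsStrictTotalOrder F (prefW w))
    (hF : ∀ f, IsStrictTotalOrder W (prefF f))
    (p q : W × F)
    (hp : p ∈ NormalForm W F prefW prefF) (hq : q ∈ NormalForm W F prefW prefF)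
    (hne : p ≠ q) (hshare : p.1 = q.1 ∨ p.2 = q.2) :
    HasDirectedCycle prefW prefF (NormalForm W F prefW prefF) := by
  have hnext : ∀ u v, Arc prefW prefF (NormalForm W F prefW prefF) u v →
      ∃ x, Arc prefW prefF (NormalForm W F prefW prefF) v x := fun _ _ h =>
    h.exists_arc_of_delta_eq hW hF (delta_normalForm prefW prefF)
  rcases arc_or_arc_of_share hW hF hp hq hne hshare with h | h
  · exact hasDirectedCycle_of_arc hnext h
  · exact hasDirectedCycle_of_arc hnext h
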